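/- For λ ∈ ℂ, let M(λ) be the symmetric 4×4 matrix of the complex quadratic form F_λ(u₀,u₁,u₂,u₃) = (1−λ)(4u₀² − 4u₀u₂ − 4u₁² − 3u₂²) + λ(4u₀² + 4u₀u₂ − 3u₂² − 4u₃²), namely M(λ) has rows (4, 0, 2(2λ−1), 0), (0, −4(1−λ), 0, 0), (2(2λ−1), 0, −3, 0), (0, 0, 0, −4λ). Then det M(λ) = −256·λ·(1−λ)·(λ²−λ+1); in particular, the quadratic form F_λ is degenerate (det M(λ) = 0) if and only if λ ∈ {0, 1, (1+i√3)/2, (1−i√3)/2}. (These four values of λ yield the degenerate quadrics of the tangential system, whose planes form the common self-polar tetrahedron.) -/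

import Mathlib

/-- The symmetric matrix of the tangential (plane-coordinate) quadratic form
`F_λ(u₀,u₁,u₂,u₃) = (1−λ)(4u₀² − 4u₀u₂ − 4u₁² − 3u₂²) + λ(4u₀² + 4u₀u₂ − 3u₂² − 4u₃²)`
of the system of quadrics inscribed in the extended oloid, for complex `λ`. -/
def M (l : ℂ) : Matrix (Fin 4) (Fin 4) ℂ :=
  !![4, 0, 2 * (2 * l - 1), 0;
     0, -4 * (1 - l), 0, 0;
     2 * (2 * l - 1), 0, -3, 0;
     0, 0, 0, -4 * l]

/-!
The coordinates `(u₀, u₂)` and `(u₁, u₃)` decouple in `F_λ`, so the determinant is a product of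
two `2 × 2` minors. The first is `-12 - 4 (2λ - 1)² = -16 (λ² - λ + 1)`, whose roots are
`(1 ± √-3) / 2`; the second, `16 λ (1 - λ)`, contributes the roots `0` and `1`.
-/

section Determinant

open Matrix

theorem checkerboard_eq_reindex_fromBlocks {R : Type*} [Zero R] (a b c d p q r s : R) :
    !![a, 0, b, 0;
       0, p, 0, q;
       c, 0, d, 0;
       0, r, 0, s] =
      (fromBlocks !![a, b; c, d] 0 0 !![p, q; r, s]).reindex
        (finSumFinEquiv.trans (Equiv.swap 1 2)) (finSumFinEquiv.trans (Equiv.swap 1 2)) := by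
  ext i j
  fin_cases i <;> fin_cases j <;> rfl

theorem det_checkerboard {R : Type*} [CommRing R] (a b c d p q r s : R) :
    !![a, 0, b, 0;
       0, p, 0, q;
       c, 0, d, 0;
       0, r, 0, s].det = (a * d - b * c) * (p * s - q * r) := by
  rw [checkerboard_eq_reindex_fromBlocks, det_reindex_self, det_fromBlocks_zero₂₁,
    det_fin_two_of, det_fin_two_of]

end Determinant

theorem det_M (l : ℂ) : (M l).det = -256 * l * (1 - l) * (l ^ 2 - l + 1) := by
  rw [M, det_checkerboard]
  ring

theorem sq_sub_self_add_one_eq_zero_iff {K : Type*} [Field K] [NeZero (2 : K)] {s : K}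
    (hs : s ^ 2 = -3) (x : K) :
    x ^ 2 - x + 1 = 0 ↔ x = (1 + s) / 2 ∨ x = (1 - s) / 2 := by
  have hdiscrim : discrim (1 : K) (-1) 1 = s * s := by
    rw [discrim]
    linear_combination -hs
  have hquadratic : x ^ 2 - x + 1 = 1 * (x * x) + -1 * x + 1 := by ring
  rw [hquadratic, quadratic_eq_zero_iff one_ne_zero hdiscrim, neg_neg, mul_one]

theorem I_mul_ofReal_sqrt_sq {x : ℝ} (hx : 0 ≤ x) :
    (Complex.I * Real.sqrt x) ^ 2 = -(x : ℂ) := by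
  rw [mul_pow, Complex.I_sq, ← Complex.ofReal_pow, Real.sq_sqrt hx, neg_one_mul]

/-- `det M(λ) = −256·λ·(1−λ)·(λ²−λ+1)`; in particular the tangential form `F_λ` is
degenerate exactly for `λ ∈ {0, 1, (1+i√3)/2, (1−i√3)/2}`. -/
theorem stmt_15 (l : ℂ) :
    (M l).det = -256 * l * (1 - l) * (l ^ 2 - l + 1) ∧
    ((M l).det = 0 ↔
      l = 0 ∨ l = 1 ∨ l = (1 + Complex.I * Real.sqrt 3) / 2 ∨
        l = (1 - Complex.I * Real.sqrt 3) / 2) := by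
  refine ⟨det_M l, ?_⟩
  have hsqrt : (Complex.I * Real.sqrt 3) ^ 2 = -3 :=
    mod_cast I_mul_ofReal_sqrt_sq zero_le_three
  have hconst : (-256 : ℂ) ≠ 0 := by norm_num
  calc (M l).det = 0
      ↔ l = 0 ∨ 1 - l = 0 ∨ l ^ 2 - l + 1 = 0 := by
        simp only [det_M, mul_eq_zero, hconst, false_or, or_assoc]
    _ ↔ l = 0 ∨ l = 1 ∨ l = (1 + Complex.I * Real.sqrt 3) / 2 ∨
        l = (1 - Complex.I * Real.sqrt 3) / 2 := by
        rw [sub_eq_zero, eq_comm (a := (1 : ℂ)), sq_sub_self_add_one_eq_zero_iff hsqrt]
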